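/- Let m be a positive half-integer, s a half-integer, and p a nonpositive integer such that mp ∈ ℤ. Then for all τ in the upper half-plane and z1, z2 ∈ ℂ (with all denominators nonzero): Φ^{[m,s]}(τ, z1, z2+pτ, 0) = e^{−2πimpz1} Φ^{[m,s]}(τ, z1, z2, 0) + e^{−2πimpz1} Σ_{k=mp}^{−1} e^{πi(s+k)(z1−z2)} q^{−(s+k)²/(4m)} [θ_{s+k,m} − θ_{−(s+k),m}](τ, z1+z2). -/

import Mathlib

open Complex

noncomputable section

namespace Wakimoto

/-- `qpow τ x = e^{2πiτx}`, i.e. `q^x` where `q = e^{2πiτ}`. -/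
def qpow (τ x : ℂ) : ℂ := Complex.exp (2 * Real.pi * Complex.I * τ * x)

/-- `e2 z = e^{2πiz}`. -/
def e2 (z : ℂ) : ℂ := Complex.exp (2 * Real.pi * Complex.I * z)

/-- The mock theta function `Φ^{[m,s]}_1`. -/
def Phi1 (m s : ℂ) (τ z1 z2 t : ℂ) : ℂ :=
  Complex.exp (-(2 * Real.pi * Complex.I) * m * t) *
    ∑' j : ℤ,
      Complex.exp (2 * Real.pi * Complex.I * (m * (j : ℂ) * (z1 + z2) + s * z1)) *
          qpow τ (m * (j : ℂ) ^ 2 + s * (j : ℂ)) /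
        (1 - e2 z1 * qpow τ (j : ℂ))

/-- The mock theta function `Φ^{[m,s]}_2`. -/
def Phi2 (m s : ℂ) (τ z1 z2 t : ℂ) : ℂ :=
  Complex.exp (-(2 * Real.pi * Complex.I) * m * t) *
    ∑' j : ℤ,
      Complex.exp (-(2 * Real.pi * Complex.I) * (m * (j : ℂ) * (z1 + z2) + s * z2)) *
          qpow τ (m * (j : ℂ) ^ 2 + s * (j : ℂ)) /
        (1 - e2 (-z2) * qpow τ (j : ℂ))

/-- `Φ^{[m,s]} = Φ^{[m,s]}_1 - Φ^{[m,s]}_2`. -/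
def Phi (m s : ℂ) (τ z1 z2 t : ℂ) : ℂ :=
  Phi1 m s τ z1 z2 t - Phi2 m s τ z1 z2 t

/-- Jacobi's theta function `θ_{k,m}`. -/
def jTheta (k m : ℂ) (τ z : ℂ) : ℂ :=
  ∑' j : ℤ,
    Complex.exp (2 * Real.pi * Complex.I * (m * ((j : ℂ) + k / (2 * m)) * z)) *
      qpow τ (m * ((j : ℂ) + k / (2 * m)) ^ 2)

/-- The signed theta function `θ^{(-)}_{k,m}`. -/
def jThetaM (k m : ℂ) (τ z : ℂ) : ℂ :=
  ∑' j : ℤ,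
    (-1 : ℂ) ^ j *
      Complex.exp (2 * Real.pi * Complex.I * (m * ((j : ℂ) + k / (2 * m)) * z)) *
      qpow τ (m * ((j : ℂ) + k / (2 * m)) ^ 2)

/-- The Dedekind eta function. -/
def eta (τ : ℂ) : ℂ := qpow τ (1 / 24) * ∏' n : ℕ, (1 - qpow τ ((n : ℂ) + 1))

/-- The Mumford theta functions `ϑ_{ab}`. -/
def mumford (a b : ℕ) (τ z : ℂ) : ℂ :=
  ∑' n : ℤ,
    Complex.exp (Real.pi * Complex.I * τ * ((n : ℂ) + (a : ℂ) / 2) ^ 2 +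
      2 * Real.pi * Complex.I * ((n : ℂ) + (a : ℂ) / 2) * (z + (b : ℂ) / 2))

/-- `z` lies in the lattice `ℤ + ℤτ`. -/
def InLattice (τ z : ℂ) : Prop := ∃ a b : ℤ, z = (a : ℂ) + (b : ℂ) * τ

/-!
Write `u = z1 + z2`. Then `Φ^{[m,s]}(τ, z1, z2, 0)` is the difference of the values at `(z1, u)` and
`(-z2, -u)` of one Appell–Lerch sum `A_s(w, u) = ∑ⱼ a_j / (1 - x_j)`, where
`a_j = e^{2πi(mju + sw)} q^{mj² + sj}` and `x_j = e^{2πiw} q^j`.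

Replacing `z2` by `z2 + pτ` multiplies `a_j` by `q^{mpj}` in the first sum, which amounts to
replacing `s` by `s + mp`, up to the factor `e^{-2πimpz1}`; the second sum behaves in the same way
after the reindexing `j ↦ j + p`.
Replacing `s` by `s + 1` multiplies `a_j` by `x_j`, so the geometric cancellation
`(a_j - a_j x_j) / (1 - x_j) = a_j` leaves in `A_s - A_{s+1}` only the theta series `∑ⱼ a_j`.
Summing these differences from `s + mp` to `s - 1` gives the theorem.
-/

open Filter Asymptotics Bornology

lemma sum_Ico_sub_apply_add_one {G : Type*} [AddCommGroup G] (f : ℤ → G) {a b : ℤ} (hab : a ≤ b) :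
    ∑ k ∈ Finset.Ico a b, (f k - f (k + 1)) = f a - f b := by
  induction b, hab using Int.leInduction with
  | base => simp
  | succ b hab ih =>
    rw [← Finset.sum_Ico_add_eq_sum_Ico_add_one hab, ih, sub_add_sub_cancel]

lemma InLattice.neg {τ z : ℂ} (hz : InLattice τ z) : InLattice τ (-z) := by
  obtain ⟨a, b, rfl⟩ := hz
  exact ⟨-a, -b, by push_cast; ring⟩

lemma isBigO_inv_one_sub_exp :
    (fun z : ℂ => (1 - exp z)⁻¹) =O[comap re (cobounded ℝ)] (fun _ => (1 : ℝ)) := by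
  rw [IsOrderBornology.cobounded_eq, comap_sup, isBigO_sup]
  constructor
  · have h : Tendsto (fun z : ℂ => 1 - exp z) (comap re atBot) (nhds (1 - 0)) :=
      tendsto_exp_comap_re_atBot.const_sub 1
    exact (h.inv₀ (by norm_num)).isBigO_one ℝ
  · have h : Tendsto (fun z : ℂ => 1 - exp z) (comap re atTop) (cobounded ℂ) :=
      (tendsto_const_sub_cobounded 1).comp tendsto_exp_comap_re_atTop
    exact (tendsto_inv₀_cobounded.comp h).isBigO_one ℝ

lemma tendsto_add_int_mul_comap_re_cobounded (a : ℂ) {b : ℂ} (hb : b.re ≠ 0) :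
    Tendsto (fun j : ℤ => a + j * b) cofinite (comap re (cobounded ℝ)) := by
  rw [tendsto_comap_iff]
  have hcast : Tendsto (fun j : ℤ => (j : ℝ)) cofinite (cobounded ℝ) :=
    Metric.cobounded_eq_cocompact (α := ℝ) ▸ Int.tendsto_coe_cofinite
  refine ((tendsto_const_add_cobounded a.re).comp
    ((tendsto_mul_right_cobounded hb).comp hcast)).congr fun j => ?_
  simp

section AppellLerch

/-- The theta summand `e^{2πi(mju + sw)} q^{mj² + sj}`: the common numerator of the series `Φ₁`
(where `(w, u) = (z1, z1 + z2)`) and `Φ₂` (where `(w, u) = (-z2, -(z1 + z2))`). -/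
def thetaTerm (m s τ w u : ℂ) (j : ℤ) : ℂ :=
  exp (2 * Real.pi * I * (m * j * u + s * w + (m * j ^ 2 + s * j) * τ))

/-- The Appell–Lerch summand, with theta numerator and denominator `1 - e^{2πiw} q^j`. -/
def appellTerm (m s τ w u : ℂ) (j : ℤ) : ℂ :=
  thetaTerm m s τ w u j / (1 - exp (2 * Real.pi * I * (w + j * τ)))

/-- The Appell–Lerch sum of which `Φ₁` and `Φ₂` (at `t = 0`) are both specializations. -/
def appellSum (m s τ w u : ℂ) : ℂ := ∑' j : ℤ, appellTerm m s τ w u j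

variable {m τ : ℂ}

lemma summable_thetaTerm (hmτ : 0 < (m * τ).im) (s w u : ℂ) :
    Summable (thetaTerm m s τ w u) := by
  have h : Summable fun j : ℤ => jacobiTheta₂_term j (m * u + s * τ) (2 * (m * τ)) := by
    rw [summable_jacobiTheta₂_term_iff, ← ofReal_ofNat, im_ofReal_mul]
    positivity
  refine (h.mul_left (exp (2 * Real.pi * I * (s * w)))).congr fun j => ?_
  rw [jacobiTheta₂_term, ← exp_add, thetaTerm]
  ring_nf

lemma isBigO_inv_one_sub_exp_two_pi_I (hτ : τ.im ≠ 0) (w : ℂ) :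
    (fun j : ℤ => (1 - exp (2 * Real.pi * I * (w + j * τ)))⁻¹) =O[cofinite]
      (fun _ => (1 : ℝ)) := by
  have hre : (2 * Real.pi * I * τ).re ≠ 0 := by simpa using hτ
  refine (isBigO_inv_one_sub_exp.comp_tendsto
    (tendsto_add_int_mul_comap_re_cobounded (2 * Real.pi * I * w) hre)).congr_left fun j => ?_
  simp only [Function.comp_apply]
  ring_nf

lemma summable_appellTerm (hmτ : 0 < (m * τ).im) (hτ : τ.im ≠ 0) (s w u : ℂ) :
    Summable (appellTerm m s τ w u) := by
  refine summable_of_isBigO (summable_thetaTerm hmτ s w u).norm ?_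
  have h := (isBigO_refl (thetaTerm m s τ w u) cofinite).norm_right.mul
    (isBigO_inv_one_sub_exp_two_pi_I hτ w)
  simp only [← div_eq_mul_inv, mul_one] at h
  exact h

lemma one_sub_exp_two_pi_I_ne_zero {w : ℂ} (hw : ¬ InLattice τ w) (j : ℤ) :
    1 - exp (2 * Real.pi * I * (w + j * τ)) ≠ 0 := by
  rw [sub_ne_zero, ne_comm, Ne, exp_eq_one_iff]
  rintro ⟨n, hn⟩
  have hwn : w + j * τ = n := mul_left_cancel₀ two_pi_I_ne_zero (by rw [hn]; ring)
  exact hw ⟨n, -j, by push_cast; linear_combination hwn⟩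

lemma appellTerm_sub_appellTerm_add_one (m s u : ℂ) {w : ℂ} (hw : ¬ InLattice τ w) (j : ℤ) :
    appellTerm m s τ w u j - appellTerm m (s + 1) τ w u j = thetaTerm m s τ w u j := by
  have hstep : thetaTerm m (s + 1) τ w u j =
      thetaTerm m s τ w u j * exp (2 * Real.pi * I * (w + j * τ)) := by
    rw [thetaTerm, thetaTerm, ← exp_add]
    ring_nf
  rw [appellTerm, appellTerm, hstep, ← sub_div, ← mul_one_sub,
    mul_div_cancel_right₀ _ (one_sub_exp_two_pi_I_ne_zero hw j)]

lemma appellSum_sub_appellSum_add_one (hmτ : 0 < (m * τ).im) (hτ : τ.im ≠ 0) (s u : ℂ) {w : ℂ}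
    (hw : ¬ InLattice τ w) :
    appellSum m s τ w u - appellSum m (s + 1) τ w u = ∑' j : ℤ, thetaTerm m s τ w u j := by
  rw [appellSum, appellSum, ← (summable_appellTerm hmτ hτ s w u).tsum_sub
    (summable_appellTerm hmτ hτ (s + 1) w u)]
  exact tsum_congr (appellTerm_sub_appellTerm_add_one m s u hw)

lemma appellSum_add_mul_tau (s w u : ℂ) {p N : ℤ} (hN : m * p = N) :
    appellSum m s τ w (u + p * τ) =
      exp (-(2 * Real.pi * I) * m * p * w) * appellSum m (s + N) τ w u := by
  rw [appellSum, appellSum, ← tsum_mul_left]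
  refine tsum_congr fun j => ?_
  rw [appellTerm, appellTerm, thetaTerm, thetaTerm, ← mul_div_assoc, ← exp_add, ← hN]
  ring_nf

lemma appellSum_sub_mul_tau_sub_mul_tau (s w u : ℂ) {p N : ℤ} (hN : m * p = N) :
    appellSum m s τ (w - p * τ) (u - p * τ) =
      exp (-(2 * Real.pi * I) * m * p * (w - u)) * appellSum m (s + N) τ w u := by
  rw [appellSum, appellSum, ← tsum_mul_left, ← (Equiv.addRight p).tsum_eq]
  refine tsum_congr fun j => ?_
  rw [appellTerm, appellTerm, thetaTerm, thetaTerm, ← mul_div_assoc, ← exp_add, ← hN,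
    Equiv.coe_addRight]
  push_cast
  ring_nf

end AppellLerch

section Theta

variable {m : ℂ}

lemma exp_mul_qpow_mul_jTheta (hm : m ≠ 0) (k τ z1 z2 : ℂ) :
    exp (Real.pi * I * k * (z1 - z2)) * qpow τ (-(k ^ 2) / (4 * m)) * jTheta k m τ (z1 + z2) =
      ∑' j : ℤ, thetaTerm m k τ z1 (z1 + z2) j := by
  rw [jTheta, ← tsum_mul_left]
  refine tsum_congr fun j => ?_
  simp only [thetaTerm, qpow, ← exp_add]
  congr 1
  field_simp
  ring

lemma jTheta_neg_left (k m τ z : ℂ) : jTheta (-k) m τ z = jTheta k m τ (-z) := by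
  rw [jTheta, jTheta, ← (Equiv.neg ℤ).tsum_eq]
  refine tsum_congr fun j => ?_
  simp only [qpow, ← exp_add, Equiv.neg_apply]
  push_cast
  ring_nf

lemma exp_mul_qpow_mul_jTheta_neg (hm : m ≠ 0) (k τ z1 z2 : ℂ) :
    exp (Real.pi * I * k * (z1 - z2)) * qpow τ (-(k ^ 2) / (4 * m)) * jTheta (-k) m τ (z1 + z2) =
      ∑' j : ℤ, thetaTerm m k τ (-z2) (-(z1 + z2)) j := by
  have h := exp_mul_qpow_mul_jTheta hm k τ (-z2) (-z1)
  rwa [neg_sub_neg, ← neg_add_rev, ← jTheta_neg_left] at h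

end Theta

section MockTheta

variable {m τ : ℂ}

lemma Phi1_zero_eq_appellSum (m s τ z1 z2 : ℂ) :
    Phi1 m s τ z1 z2 0 = appellSum m s τ z1 (z1 + z2) := by
  simp only [Phi1, appellSum, appellTerm, thetaTerm, qpow, e2, mul_zero, exp_zero, one_mul,
    ← exp_add]
  exact tsum_congr fun j => by ring_nf

lemma Phi2_zero_eq_appellSum (m s τ z1 z2 : ℂ) :
    Phi2 m s τ z1 z2 0 = appellSum m s τ (-z2) (-(z1 + z2)) := by
  simp only [Phi2, appellSum, appellTerm, thetaTerm, qpow, e2, mul_zero, exp_zero, one_mul,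
    ← exp_add]
  exact tsum_congr fun j => by ring_nf

lemma Phi_add_mul_tau (s z1 z2 : ℂ) {p N : ℤ} (hN : m * p = N) :
    Phi m s τ z1 (z2 + p * τ) 0 =
      exp (-(2 * Real.pi * I) * m * p * z1) * Phi m (s + N) τ z1 z2 0 := by
  have h1 := appellSum_add_mul_tau (τ := τ) s z1 (z1 + z2) hN
  have h2 := appellSum_sub_mul_tau_sub_mul_tau (τ := τ) s (-z2) (-(z1 + z2)) hN
  rw [show -z2 - -(z1 + z2) = z1 by ring] at h2
  simp only [Phi, Phi1_zero_eq_appellSum, Phi2_zero_eq_appellSum]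
  rw [← add_assoc, h1, neg_add', neg_add', h2, mul_sub]

lemma Phi_sub_Phi_add_one (hmτ : 0 < (m * τ).im) (hτ : τ.im ≠ 0) (s : ℂ) {z1 z2 : ℂ}
    (hz1 : ¬ InLattice τ z1) (hz2 : ¬ InLattice τ z2) :
    Phi m s τ z1 z2 0 - Phi m (s + 1) τ z1 z2 0 =
      exp (Real.pi * I * s * (z1 - z2)) * qpow τ (-(s ^ 2) / (4 * m)) *
        (jTheta s m τ (z1 + z2) - jTheta (-s) m τ (z1 + z2)) := by
  have hm : m ≠ 0 := by
    rintro rfl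
    simp at hmτ
  have hz2' : ¬ InLattice τ (-z2) := fun h => hz2 (neg_neg z2 ▸ h.neg)
  rw [mul_sub, exp_mul_qpow_mul_jTheta hm, exp_mul_qpow_mul_jTheta_neg hm,
    ← appellSum_sub_appellSum_add_one hmτ hτ s _ hz1,
    ← appellSum_sub_appellSum_add_one hmτ hτ s _ hz2']
  simp only [Phi, Phi1_zero_eq_appellSum, Phi2_zero_eq_appellSum]
  ring

lemma Phi_add_intCast (hmτ : 0 < (m * τ).im) (hτ : τ.im ≠ 0) (s : ℂ) {z1 z2 : ℂ}
    (hz1 : ¬ InLattice τ z1) (hz2 : ¬ InLattice τ z2) {N : ℤ} (hN : N ≤ 0) :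
    Phi m (s + N) τ z1 z2 0 = Phi m s τ z1 z2 0 +
      ∑ k ∈ Finset.Icc N (-1),
        exp (Real.pi * I * (s + k) * (z1 - z2)) * qpow τ (-((s + k) ^ 2) / (4 * m)) *
          (jTheta (s + k) m τ (z1 + z2) - jTheta (-(s + k)) m τ (z1 + z2)) := by
  have htel := sum_Ico_sub_apply_add_one (fun k : ℤ => Phi m (s + k) τ z1 z2 0) hN
  simp only [Int.cast_add, Int.cast_one, Int.cast_zero, add_zero, ← add_assoc,
    Phi_sub_Phi_add_one hmτ hτ _ hz1 hz2] at htel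
  rw [← zero_sub, Finset.Icc_sub_one_right_eq_Ico, htel, add_sub_cancel]

end MockTheta

theorem statement9_general {m : ℝ} (hm : 0 < m) (s : ℂ) {p N : ℤ} (hp : p ≤ 0)
    (hN : m * (p : ℝ) = (N : ℝ)) {τ : ℂ} (hτ : 0 < τ.im) {z1 z2 : ℂ}
    (hz1 : ¬ InLattice τ z1) (hz2 : ¬ InLattice τ z2) :
    Phi m s τ z1 (z2 + p * τ) 0 =
      exp (-(2 * Real.pi * I) * m * p * z1) * Phi m s τ z1 z2 0 +
        exp (-(2 * Real.pi * I) * m * p * z1) *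
          ∑ k ∈ Finset.Icc N (-1),
            exp (Real.pi * I * (s + k) * (z1 - z2)) * qpow τ (-((s + k) ^ 2) / (4 * m)) *
              (jTheta (s + k) m τ (z1 + z2) - jTheta (-(s + k)) m τ (z1 + z2)) := by
  have hmτ : 0 < ((m : ℂ) * τ).im := by
    rw [im_ofReal_mul]
    positivity
  have hNc : (m : ℂ) * p = N := mod_cast hN
  have hN0 : N ≤ 0 := by
    have h : (N : ℝ) ≤ 0 := hN ▸ mul_nonpos_of_nonneg_of_nonpos hm.le (mod_cast hp)
    exact_mod_cast h
  rw [Phi_add_mul_tau s z1 z2 hNc, Phi_add_intCast hmτ hτ.ne' s hz1 hz2 hN0, mul_add]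

theorem statement9 (m s : ℝ) (hm : ∃ n : ℕ, 0 < n ∧ m = n / 2)
    (hs : ∃ a : ℤ, s = a / 2) (p : ℤ) (hp : p ≤ 0) (N : ℤ)
    (hN : m * (p : ℝ) = (N : ℝ))
    (τ : ℂ) (hτ : 0 < τ.im) (z1 z2 : ℂ)
    (hz1 : ¬ InLattice τ z1) (hz2 : ¬ InLattice τ z2) :
    Phi (m : ℂ) (s : ℂ) τ z1 (z2 + (p : ℂ) * τ) 0 =
      Complex.exp (-(2 * Real.pi * Complex.I) * (m : ℂ) * (p : ℂ) * z1) *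
          Phi (m : ℂ) (s : ℂ) τ z1 z2 0 +
        Complex.exp (-(2 * Real.pi * Complex.I) * (m : ℂ) * (p : ℂ) * z1) *
          ∑ k ∈ Finset.Icc N (-1),
            Complex.exp (Real.pi * Complex.I * ((s : ℂ) + (k : ℂ)) * (z1 - z2)) *
              qpow τ (-(((s : ℂ) + (k : ℂ)) ^ 2) / (4 * (m : ℂ))) *
              (jTheta ((s : ℂ) + (k : ℂ)) (m : ℂ) τ (z1 + z2) -
                jTheta (-((s : ℂ) + (k : ℂ))) (m : ℂ) τ (z1 + z2)) := by
  obtain ⟨n, hn, rfl⟩ := hm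
  exact statement9_general (by positivity) s hp hN hτ hz1 hz2

end Wakimoto
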